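/- arXiv:1801.03536 — 2 statements merged into one kernel-verified Lean document; each statement's English description precedes it below -/
import Mathlib

section
/- Let p₀ = K²(C⁴(K+1)+2C²+1) · (Σ_{n = C²(K+1)+2}^{(K+1)C⁶+2C⁴+C²+2} n) + 1 and L₀ = (C⁴(K+1)+2C²+1)·S_{p₀}. Then σ has the local unique composition property under L₀: for all i, j ≥ L₀ and m, n ∈ ℤ₊, if u_{[i−L₀, i+L₀)} = u_{[j−L₀, j+L₀)}, |σ(u_{[0,m)})| ≤ i < |σ(u_{[0,m+1)})| and |σ(u_{[0,n)})| ≤ j < |σ(u_{[0,n+1)})|, then u_m = u_n. -/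
open List Filter

section Defs

variable {A : Type*}

/-- The segment `u_[i,j)` of the sequence `u`. -/
def seg (u : ℕ → A) (i j : ℕ) : List A :=
  (List.range (j - i)).map fun k => u (i + k)

/-- A substitution applied to a word, letter by letter. -/
def substWord (σ : A → List A) (w : List A) : List A := w.flatMap σ

/-- `σ^p` applied to a word. -/
def substPow (σ : A → List A) (p : ℕ) (w : List A) : List A := (substWord σ)^[p] w

/-- A substitution is primitive if some power of it sends every letter to a word
containing every letter. -/
def IsPrimitiveSubst (σ : A → List A) : Prop :=
  ∃ k : ℕ, ∀ a b : A, a ∈ substPow σ k [b]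

/-- `u` is a fixed point of `σ`: the image of every prefix of `u` is again a prefix of `u`. -/
def IsFixedPoint (σ : A → List A) (u : ℕ → A) : Prop :=
  ∀ m : ℕ, substWord σ (seg u 0 m) = seg u 0 (substWord σ (seg u 0 m)).length

/-- `u` is aperiodic under the left shift: `T^i u ≠ u` for all `i ≥ 1`. -/
def AperiodicSeq (u : ℕ → A) : Prop := ∀ i : ℕ, 1 ≤ i → (fun n => u (n + i)) ≠ u

/-- The set `E_p` of natural `p`-cutting points. -/
def cutPoints (σ : A → List A) (u : ℕ → A) (p : ℕ) : Set ℕ :=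
  { m | ∃ n : ℕ, m = (substPow σ p (seg u 0 n)).length }

/-- Unilateral recognizability of `σ` (with fixed point `u`). -/
def UnilaterallyRecognizable (σ : A → List A) (u : ℕ → A) : Prop :=
  ∃ L : ℕ, 1 ≤ L ∧ ∀ i j : ℕ,
    seg u i (i + L) = seg u j (j + L) → i ∈ cutPoints σ u 1 → j ∈ cutPoints σ u 1

/-- `L_n(u)`: the set of factors of `u` of length `n`. -/
def factors (u : ℕ → A) (n : ℕ) : Set (List A) := { w | ∃ i : ℕ, w = seg u i (i + n) }

/-- `L(u)`: the language of `u` (including the empty word). -/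
def lang (u : ℕ → A) : Set (List A) := { w | ∃ i n : ℕ, w = seg u i (i + n) }

/-- `w^n`: the concatenation of `n` copies of `w`. -/
def wpow (w : List A) (n : ℕ) : List A := (List.replicate n w).flatten

/-- A nonempty word `v` is primitive if `v = w^n` with `w` nonempty forces `w = v`. -/
def PrimitiveWord (v : List A) : Prop :=
  ∀ w : List A, w ≠ [] → ∀ n : ℕ, 1 ≤ n → v = wpow w n → w = v

/-- `g` is a gap of occurrences of `w` in `u` if every interval of length `g` in `ℤ₊`
contains an occurrence of `w`. -/
def IsGap (u : ℕ → A) (w : List A) (g : ℕ) : Prop := ∀ i : ℕ, w <:+: seg u i (i + g)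

/-- The minimal gap of a word. -/
noncomputable def minGap (u : ℕ → A) (w : List A) : ℕ := sInf { g | IsGap u w g }

/-- `g`: the maximum over `w ∈ L₂(u)` of the minimal gap of `w`. -/
noncomputable def gapConst (u : ℕ → A) : ℕ :=
  sSup { m | ∃ w ∈ factors u 2, m = minGap u w }

/-- A natural `p`-cutting `{α, σ^p(u_{i'}), …, σ^p(u_{i'+k-1}), β}` of `u_[i,i+ℓ)`. -/
def IsNaturalCutting (σ : A → List A) (u : ℕ → A) (p i ℓ : ℕ)
    (α : List A) (i' k : ℕ) (β : List A) : Prop :=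
  1 ≤ k ∧
  α <:+ substPow σ p [u (i' - 1)] ∧
  β <+: substPow σ p [u (i' + k)] ∧
  seg u i (i + ℓ) = α ++ substPow σ p (seg u i' (i' + k)) ++ β ∧
  i + α.length = (substPow σ p (seg u 0 i')).length

section Fin

variable [Fintype A] [Nonempty A] [DecidableEq A]

/-- The incidence matrix of a substitution: the `(a,b)` entry is `|σ(a)|_b`. -/
def incMatrix (σ : A → List A) : Matrix A A ℕ := Matrix.of fun a b => (σ a).count b

/-- The incidence matrix as a real matrix. -/
noncomputable def incMatrixR (σ : A → List A) : Matrix A A ℝ :=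
  Matrix.of fun a b => ((σ a).count b : ℝ)

/-- `S_p = max_{a ∈ A} |σ^p(a)|`. -/
def Sp (σ : A → List A) (p : ℕ) : ℕ :=
  Finset.univ.sup' Finset.univ_nonempty fun a => (substPow σ p [a]).length

/-- `I_p = min_{a ∈ A} |σ^p(a)|`. -/
def Ip (σ : A → List A) (p : ℕ) : ℕ :=
  Finset.univ.inf' Finset.univ_nonempty fun a => (substPow σ p [a]).length

/-- `C = ⌈(max_b β_b)/(min_b β_b)⌉` for a positive eigenvector `β`. -/
noncomputable def Cst (β : A → ℝ) : ℕ :=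
  ⌈(Finset.univ.sup' Finset.univ_nonempty β) / (Finset.univ.inf' Finset.univ_nonempty β)⌉₊

/-- `K = ⌈λ C² max{2(g+1), (#A)²}⌉`. -/
noncomputable def Kst (u : ℕ → A) (lam : ℝ) (β : A → ℝ) : ℕ :=
  ⌈lam * (Cst β : ℝ) ^ 2 *
    max (2 * ((gapConst u : ℝ) + 1)) ((Fintype.card A : ℝ) ^ 2)⌉₊

/-- The constant `p₀` of Lemma 4.2. -/
noncomputable def p0 (u : ℕ → A) (lam : ℝ) (β : A → ℝ) : ℕ :=
  (Kst u lam β) ^ 2 * ((Cst β) ^ 4 * (Kst u lam β + 1) + 2 * (Cst β) ^ 2 + 1) *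
    (∑ n ∈ Finset.Icc ((Cst β) ^ 2 * (Kst u lam β + 1) + 2)
        ((Kst u lam β + 1) * (Cst β) ^ 6 + 2 * (Cst β) ^ 4 + (Cst β) ^ 2 + 2), n) + 1

/-- The constant `L₀ = (C⁴(K+1)+2C²+1) S_{p₀}`. -/
noncomputable def L0 (σ : A → List A) (u : ℕ → A) (lam : ℝ) (β : A → ℝ) : ℕ :=
  ((Cst β) ^ 4 * (Kst u lam β + 1) + 2 * (Cst β) ^ 2 + 1) * Sp σ (p0 u lam β)

/-- The ℓ¹ norm of a vector. -/
def l1norm (f : A → ℝ) : ℝ := ∑ a, |f a|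

/-- The projective metric on positive row vectors. -/
noncomputable def projMetric (x y : A → ℝ) : ℝ :=
  Real.log ((Finset.univ.sup' Finset.univ_nonempty fun a => x a / y a) /
    (Finset.univ.inf' Finset.univ_nonempty fun a => x a / y a))

/-- The Birkhoff contraction coefficient of a matrix. -/
noncomputable def birkhoff (M : Matrix A A ℝ) : ℝ :=
  sSup { r | ∃ x y : A → ℝ, (∀ a, 0 < x a) ∧ (∀ a, 0 < y a) ∧
    LinearIndependent ℝ ![x, y] ∧
    r = projMetric (Matrix.vecMul x M) (Matrix.vecMul y M) / projMetric x y }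

end Fin

/-- Membership in the vertex set `V^*`: pairs `(xac, ybc)` of factors of `u` of length
`N + L₁ + 1` with `a ≠ b` and `|c| = L₁`. -/
def memVstar (u : ℕ → A) (N L₁ : ℕ) (p : List A × List A) : Prop :=
  ∃ (x y c : List A) (a b : A), a ≠ b ∧
    x.length = N ∧ y.length = N ∧ c.length = L₁ ∧
    p.1 = x ++ a :: c ∧ p.2 = y ++ b :: c ∧
    p.1 ∈ factors u (N + L₁ + 1) ∧ p.2 ∈ factors u (N + L₁ + 1)

/-- An edge between representatives: there is a word `w` with `s'w` a suffix of `σ(s)` and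
`t'w` a suffix of `σ(t)`. -/
def edgeRep (σ : A → List A) (p q : List A × List A) : Prop :=
  ∃ w : List A, w ≠ [] ∧ (q.1 ++ w) <:+ substWord σ p.1 ∧ (q.2 ++ w) <:+ substWord σ p.2

/-- An edge in the graph `G` between the unordered pairs represented by `p` and `q`. -/
def graphEdge (σ : A → List A) (p q : List A × List A) : Prop :=
  edgeRep σ p q ∨ edgeRep σ p q.swap ∨ edgeRep σ p.swap q ∨ edgeRep σ p.swap q.swap

/-- A representative generates a gap of natural 1-cutting points. -/
def genGapRep (σ : A → List A) (p : List A × List A) : Prop :=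
  ∃ (α β : A) (γ δ : List A),
    (σ α <:+ σ β ∧ σ α ≠ σ β) ∧
    List.Forall₂ (fun s t => σ s = σ t) γ δ ∧
    (α :: γ) <:+ substWord σ p.1 ∧ (β :: δ) <:+ substWord σ p.2

/-- The unordered pair represented by `p` generates a gap of natural 1-cutting points. -/
def genGap (σ : A → List A) (p : List A × List A) : Prop :=
  genGapRep σ p ∨ genGapRep σ p.swap

/-- The list of consecutive two-letter blocks of a word. -/
def pairsList (l : List A) : List (List A) :=
  List.zipWith (fun a b => [a, b]) l l.tail

end Defs

/-!
For each scale `p ≤ p₀` choose a `p`-cutting point shortly before `i` and carry it over to its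
translate next to `j`. Record the word of `N` letters starting at the index of the former and the
word of `W` letters whose `σ^p`-images start at the first `p`-cutting point after the latter. Since
`u` has at most `K n` factors of length `n`, two scales `p < q` record the same pair of words.
Applying `σ^(q-p)` to the picture at scale `p` gives two occurrences of one word near `i`: one from
the rescaled picture and one from the picture at scale `q`. Their distance is at most `S_q`, and `u`
contains no `(K+1)`-th power, so they coincide. Hence near `i` and `j` the sequence is cut into
`σ`-images at corresponding places, with the same letters underneath.

The bounds on complexity and powers rest on the lengths `|σ^p(a)|` being comparable to `λ^p`
uniformly in `a`, as one sees by weighting letters with the eigenvector `β`.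
-/

section Words

variable {A : Type*} {σ : A → List A}

theorem substPow_succ (σ : A → List A) (p : ℕ) (w : List A) :
    substPow σ (p + 1) w = substWord σ (substPow σ p w) :=
  Function.iterate_succ_apply' _ _ _

theorem substPow_add (σ : A → List A) (p r : ℕ) (w : List A) :
    substPow σ (p + r) w = substPow σ p (substPow σ r w) :=
  Function.iterate_add_apply _ _ _ _

theorem substPow_append (σ : A → List A) (p : ℕ) (v w : List A) :
    substPow σ p (v ++ w) = substPow σ p v ++ substPow σ p w := by
  induction p with
  | zero => rfl
  | succ p ih => simp only [substPow_succ, ih, substWord, List.flatMap_append]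

theorem substPow_nil (σ : A → List A) (p : ℕ) : substPow σ p [] = [] := by
  simpa using substPow_append σ p [] []

theorem substPow_infix_substPow {v w : List A} (h : v <:+: w) (p : ℕ) :
    substPow σ p v <:+: substPow σ p w := by
  obtain ⟨s, t, rfl⟩ := h
  exact ⟨substPow σ p s, substPow σ p t, by simp only [substPow_append]⟩

theorem length_le_length_substPow (hσ : ∀ a, σ a ≠ []) (p : ℕ) (w : List A) :
    w.length ≤ (substPow σ p w).length := by
  induction p with
  | zero => rfl
  | succ p ih =>
    rw [substPow_succ, substWord, List.length_flatMap]
    refine ih.trans ?_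
    simpa using List.length_le_sum_of_one_le ((substPow σ p w).map fun a => (σ a).length)
      (by simpa [Nat.one_le_iff_ne_zero] using fun a _ => hσ a)

variable {u : ℕ → A}

theorem length_seg (u : ℕ → A) (i j : ℕ) : (seg u i j).length = j - i := by
  simp [seg]

theorem getElem_seg {i j k : ℕ} (hk : k < (seg u i j).length) : (seg u i j)[k] = u (i + k) := by
  simp [seg]

theorem seg_succ (u : ℕ → A) (i : ℕ) : seg u i (i + 1) = [u i] := by
  simp [seg]

theorem seg_append_seg {i j k : ℕ} (hij : i ≤ j) (hjk : j ≤ k) :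
    seg u i j ++ seg u j k = seg u i k := by
  obtain ⟨a, rfl⟩ := Nat.exists_eq_add_of_le hij
  obtain ⟨b, rfl⟩ := Nat.exists_eq_add_of_le hjk
  have hlen : i + (a + b) - (i + a) = b := by omega
  simp [seg, hlen, Nat.add_assoc, List.range_add, Function.comp_def]

theorem seg_infix_seg {i i' j' j : ℕ} (hi : i ≤ i') (h : i' ≤ j') (hj : j' ≤ j) :
    seg u i' j' <:+: seg u i j :=
  ⟨seg u i i', seg u j' j, by rw [seg_append_seg hi h, seg_append_seg (hi.trans h) hj]⟩

theorem take_drop_seg {i j s n : ℕ} (h : i + s + n ≤ j) :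
    ((seg u i j).drop s).take n = seg u (i + s) (i + s + n) := by
  refine List.ext_getElem ?_ fun k _ _ => ?_
  · simp only [List.length_take, List.length_drop, length_seg]
    omega
  · simp only [List.getElem_take, List.getElem_drop, getElem_seg, Nat.add_assoc]

end Words

section Agreement

variable {A : Type*} {u : ℕ → A} {e f k l l' : ℕ}

/-- `u` reads the same word of length `l` from position `e` as from position `f`. -/
def Agree (u : ℕ → A) (e f l : ℕ) : Prop := ∀ t < l, u (e + t) = u (f + t)

theorem seg_eq_seg_iff_agree : seg u e (e + l) = seg u f (f + l) ↔ Agree u e f l := by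
  simp [seg, Agree]

theorem Agree.symm (h : Agree u e f l) : Agree u f e l := fun t ht => (h t ht).symm

theorem Agree.trans (h : Agree u e f l) (h' : Agree u f k l) : Agree u e k l :=
  fun t ht => (h t ht).trans (h' t ht)

theorem Agree.mono (h : Agree u e f l) (hl : l' ≤ l) : Agree u e f l' :=
  fun t ht => h t (ht.trans_le hl)

theorem Agree.shift (h : Agree u e f l) (a : ℕ) (hl : a + l' ≤ l) :
    Agree u (e + a) (f + a) l' := fun t ht => by
  simpa only [Nat.add_assoc] using h (a + t) (by omega)

theorem agree_of_seg_eq {i j L x y : ℕ} (h : seg u (i - L) (i + L) = seg u (j - L) (j + L))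
    (hi : L ≤ i) (hj : L ≤ j) (hxy : x + j = y + i) (hx : i ≤ x + L) (hl : x + l ≤ i + L) :
    Agree u x y l := by
  have hag : Agree u (i - L) (j - L) (2 * L) := by
    rw [← seg_eq_seg_iff_agree]
    convert h using 2 <;> omega
  convert hag.shift (x + L - i) (l' := l) (by omega) using 1 <;> omega

theorem exists_agree_of_seg_infix {n z g : ℕ} (h : seg u n (n + k) <:+: seg u z (z + g)) :
    ∃ y, z ≤ y ∧ y + k ≤ z + g ∧ Agree u n y k := by
  obtain ⟨s, hs, hget⟩ := List.infix_iff_getElem?.mp h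
  simp only [length_seg, Nat.add_sub_cancel_left] at hs hget
  refine ⟨z + s, by omega, by omega, fun t ht => ?_⟩
  have := hget t ht
  rw [List.getElem?_eq_getElem (by rw [length_seg]; omega), Option.some_inj,
    getElem_seg, getElem_seg] at this
  rw [← this, Nat.add_right_comm, Nat.add_assoc]

/-- `u` contains no `(K + 1)`-th power of a nonempty word: a factor that agrees with its translate
by `d` over a length `K * d` is such a power of a word of length `d`. -/
def PowerFree (u : ℕ → A) (K : ℕ) : Prop := ∀ x d, 0 < d → ¬ Agree u x (x + d) (K * d)

theorem PowerFree.eq_of_agree {K s x y : ℕ} (hpow : PowerFree u K) (h : Agree u x y l)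
    (hxy : x ≤ y + s) (hyx : y ≤ x + s) (hs : K * s ≤ l) : x = y := by
  wlog hle : x ≤ y generalizing x y
  · exact (this h.symm hyx hxy (by omega)).symm
  obtain ⟨d, rfl⟩ := Nat.exists_eq_add_of_le hle
  by_contra hne
  exact hpow x d (by omega) (h.mono ((Nat.mul_le_mul_left K (by omega)).trans hs))

end Agreement

section CuttingPoints

variable {A : Type*} {σ : A → List A} {u : ℕ → A} {p n : ℕ}

/-- The `n`-th natural `p`-cutting point; `cutPoints σ u p` is the range of `cutPos σ u p`. -/
def cutPos (σ : A → List A) (u : ℕ → A) (p n : ℕ) : ℕ := (substPow σ p (seg u 0 n)).length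

/-- The `n`-th `p`-block: the set of positions at which `u = σ^p(u)` reads `σ^p(u_n)`. -/
abbrev block (σ : A → List A) (u : ℕ → A) (p n : ℕ) : Set ℕ :=
  Set.Ico (cutPos σ u p n) (cutPos σ u p (n + 1))

theorem cutPos_zero (σ : A → List A) (u : ℕ → A) (p : ℕ) : cutPos σ u p 0 = 0 := by
  simp [cutPos, seg, substPow_nil]

theorem cutPos_add_right (σ : A → List A) (u : ℕ → A) (p n k : ℕ) :
    cutPos σ u p (n + k) = cutPos σ u p n + (substPow σ p (seg u n (n + k))).length := by
  rw [cutPos, ← seg_append_seg n.zero_le (n.le_add_right k), substPow_append, List.length_append,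
    cutPos]

theorem monotone_cutPos (σ : A → List A) (u : ℕ → A) (p : ℕ) : Monotone (cutPos σ u p) :=
  monotone_nat_of_le_succ fun n => by rw [cutPos_add_right]; exact Nat.le_add_right _ _

theorem strictMono_cutPos (hσ : ∀ a, σ a ≠ []) (u : ℕ → A) (p : ℕ) :
    StrictMono (cutPos σ u p) :=
  strictMono_nat_of_lt_succ fun n => by
    have := length_le_length_substPow hσ p [u n]
    rw [cutPos_add_right, seg_succ]
    exact Nat.lt_add_of_pos_right this

theorem exists_mem_block (hσ : ∀ a, σ a ≠ []) (u : ℕ → A) (p i : ℕ) :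
    ∃ n, i ∈ block σ u p n := by
  have hunion := iUnion_Ico_map_succ_eq_Ici (fun n => monotone_cutPos σ u p n.zero_le)
    (strictMono_cutPos hσ u p).not_bddAbove_range_of_wellFoundedLT
  exact Set.mem_iUnion.mp (hunion.ge ((cutPos_zero σ u p).trans_le i.zero_le))

theorem Agree.cutPos_add_cutPos {e f l t : ℕ} (h : Agree u e f l) (ht : t ≤ l)
    (σ : A → List A) (p : ℕ) :
    cutPos σ u p (e + t) + cutPos σ u p f = cutPos σ u p (f + t) + cutPos σ u p e := by
  rw [cutPos_add_right, cutPos_add_right, seg_eq_seg_iff_agree.mpr (h.mono ht)]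
  ring

theorem Agree.eq_of_mem_block {e f l i j m n : ℕ} (h : Agree u e f l)
    (hij : cutPos σ u p e + j = cutPos σ u p f + i) (he : cutPos σ u p e ≤ i)
    (hl : i < cutPos σ u p (e + l)) (hm : i ∈ block σ u p m) (hn : j ∈ block σ u p n) :
    u m = u n := by
  have hmono := monotone_cutPos σ u p
  have hem : e < m + 1 := hmono.reflect_lt (he.trans_lt hm.2)
  have hml : m < e + l := hmono.reflect_lt (hm.1.trans_lt hl)
  obtain ⟨t, rfl⟩ := Nat.exists_eq_add_of_le (Nat.le_of_lt_succ hem)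
  have hstart := h.cutPos_add_cutPos (t := t) (by omega) σ p
  have hend := h.cutPos_add_cutPos (t := t + 1) (by omega) σ p
  rw [← Nat.add_assoc, ← Nat.add_assoc] at hend
  obtain ⟨hm₁, hm₂⟩ := hm
  obtain ⟨hn₁, hn₂⟩ := hn
  have hfn : f + t < n + 1 := hmono.reflect_lt (by omega)
  have hnf : n < f + t + 1 := hmono.reflect_lt (by omega)
  obtain rfl : n = f + t := by omega
  exact h t (by omega)

theorem substPow_seg_zero (hfix : IsFixedPoint σ u) (p n : ℕ) :
    substPow σ p (seg u 0 n) = seg u 0 (cutPos σ u p n) := by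
  induction p with
  | zero => simp [substPow, cutPos, length_seg]
  | succ p ih => rw [cutPos, substPow_succ, ih]; exact hfix _

theorem cutPos_add_left (hfix : IsFixedPoint σ u) (p r n : ℕ) :
    cutPos σ u (p + r) n = cutPos σ u p (cutPos σ u r n) := by
  rw [cutPos, substPow_add, substPow_seg_zero hfix r, ← cutPos]

theorem substPow_seg (hfix : IsFixedPoint σ u) (p n k : ℕ) :
    substPow σ p (seg u n (n + k)) = seg u (cutPos σ u p n) (cutPos σ u p (n + k)) := by
  have hle := monotone_cutPos σ u p (n.le_add_right k)
  have h := substPow_seg_zero hfix p (n + k)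
  rwa [← seg_append_seg n.zero_le (n.le_add_right k), substPow_append, substPow_seg_zero hfix,
    ← seg_append_seg (Nat.zero_le _) hle, List.append_cancel_left_eq] at h

theorem Agree.image {e f l : ℕ} (h : Agree u e f l) (hfix : IsFixedPoint σ u) (p : ℕ) :
    Agree u (cutPos σ u p e) (cutPos σ u p f) (substPow σ p (seg u e (e + l))).length := by
  rw [← seg_eq_seg_iff_agree, ← cutPos_add_right, ← substPow_seg hfix,
    seg_eq_seg_iff_agree.mpr h, ← cutPos_add_right, ← substPow_seg hfix]

end CuttingPoints

section Sizes

variable {A : Type*} [Fintype A] [Nonempty A] {σ : A → List A} {u : ℕ → A}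

theorem length_substPow_singleton_le_Sp (σ : A → List A) (p : ℕ) (a : A) :
    (substPow σ p [a]).length ≤ Sp σ p :=
  Finset.le_sup' (fun a => (substPow σ p [a]).length) (Finset.mem_univ a)

theorem Ip_le_length_substPow_singleton (σ : A → List A) (p : ℕ) (a : A) :
    Ip σ p ≤ (substPow σ p [a]).length :=
  Finset.inf'_le (fun a => (substPow σ p [a]).length) (Finset.mem_univ a)

theorem cutPos_add_le (σ : A → List A) (u : ℕ → A) (p n k : ℕ) :
    cutPos σ u p (n + k) ≤ cutPos σ u p n + k * Sp σ p := by
  induction k with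
  | zero => simp
  | succ k ih =>
    have := length_substPow_singleton_le_Sp σ p (u (n + k))
    rw [← Nat.add_assoc, cutPos_add_right, seg_succ, Nat.succ_mul]
    omega

theorem le_cutPos_add (σ : A → List A) (u : ℕ → A) (p n k : ℕ) :
    cutPos σ u p n + k * Ip σ p ≤ cutPos σ u p (n + k) := by
  induction k with
  | zero => simp
  | succ k ih =>
    have := Ip_le_length_substPow_singleton σ p (u (n + k))
    rw [← Nat.add_assoc, cutPos_add_right σ u p (n + k), seg_succ, Nat.succ_mul]
    omega

theorem mul_Ip_le_length_substPow_seg (σ : A → List A) (u : ℕ → A) (p n k : ℕ) :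
    k * Ip σ p ≤ (substPow σ p (seg u n (n + k))).length := by
  have := le_cutPos_add σ u p n k
  rw [cutPos_add_right] at this
  omega

theorem monotone_Sp (hσ : ∀ a, σ a ≠ []) : Monotone (Sp σ) :=
  monotone_nat_of_le_succ fun p => Finset.sup'_le _ _ fun a _ => by
    refine le_trans ?_ (length_substPow_singleton_le_Sp σ (p + 1) a)
    rw [Nat.add_comm, substPow_add]
    exact length_le_length_substPow hσ 1 _

end Sizes

section Factors

variable {A : Type*} {σ : A → List A} {u : ℕ → A} {n p : ℕ}

theorem finite_factors [Finite A] (u : ℕ → A) (n : ℕ) : (factors u n).Finite :=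
  (List.finite_length_eq A n).subset fun _ ⟨i, hi⟩ => by simp [hi, length_seg]

theorem ncard_factors_le_pow [Fintype A] (u : ℕ → A) (n : ℕ) :
    (factors u n).ncard ≤ Fintype.card A ^ n := by
  calc (factors u n).ncard ≤ {w : List A | w.length = n}.ncard :=
        Set.ncard_le_ncard (fun _ ⟨i, hi⟩ => by simp [hi, length_seg]) (List.finite_length_eq A n)
    _ = Fintype.card A ^ n := by
        rw [← card_vector n, ← Nat.card_eq_fintype_card]; rfl

theorem exists_lt_agree_agree [Finite A] {N P W : ℕ} (e f : ℕ → ℕ)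
    (hP : (factors u N).ncard * (factors u W).ncard < P) :
    ∃ p q, p < q ∧ q < P ∧ Agree u (e p) (e q) N ∧ Agree u (f p) (f q) W := by
  have hcard : (factors u N ×ˢ factors u W).ncard < (Set.Iio P).ncard := by
    rwa [Set.ncard_prod, Set.ncard_Iio_nat]
  obtain ⟨p, hp, q, hq, hne, heq⟩ := Set.exists_ne_map_eq_of_ncard_lt_of_maps_to hcard
    (f := fun p => (seg u (e p) (e p + N), seg u (f p) (f p + W)))
    (fun p _ => ⟨⟨_, rfl⟩, ⟨_, rfl⟩⟩) ((finite_factors u N).prod (finite_factors u W))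
  wlog hpq : p < q generalizing p q
  · exact this q hq p hp hne.symm heq.symm (by omega)
  obtain ⟨hN, hW⟩ := Prod.ext_iff.mp heq
  exact ⟨p, q, hpq, hq, seg_eq_seg_iff_agree.mp hN, seg_eq_seg_iff_agree.mp hW⟩

variable [Fintype A] [Nonempty A]

theorem exists_drop_take_eq_of_mem_factors (hσ : ∀ a, σ a ≠ []) (hfix : IsFixedPoint σ u)
    (hn : n ≤ Ip σ p + 1) {w : List A} (hw : w ∈ factors u n) :
    ∃ v ∈ factors u 2, ∃ s < Sp σ p, ((substPow σ p v).drop s).take n = w := by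
  obtain ⟨i, rfl⟩ := hw
  obtain ⟨m, hm, him⟩ := exists_mem_block hσ u p i
  have hS := cutPos_add_le σ u p m 1
  have hI : _ ≤ cutPos σ u p (m + 2) := le_cutPos_add σ u p (m + 1) 1
  refine ⟨seg u m (m + 2), ⟨m, rfl⟩, i - cutPos σ u p m, by omega, ?_⟩
  rw [substPow_seg hfix, take_drop_seg (by omega), Nat.add_sub_cancel' hm]

theorem ncard_factors_le_card_sq_mul_Sp (hσ : ∀ a, σ a ≠ []) (hfix : IsFixedPoint σ u)
    (hn : n ≤ Ip σ p + 1) : (factors u n).ncard ≤ Fintype.card A ^ 2 * Sp σ p := by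
  have hfin : (factors u 2 ×ˢ Set.Iio (Sp σ p)).Finite :=
    (finite_factors u 2).prod (Set.finite_Iio _)
  have hsub : factors u n ⊆ (fun vs : List A × ℕ => ((substPow σ p vs.1).drop vs.2).take n) ''
      (factors u 2 ×ˢ Set.Iio (Sp σ p)) := fun w hw => by
    obtain ⟨v, hv, s, hs, rfl⟩ := exists_drop_take_eq_of_mem_factors hσ hfix hn hw
    exact ⟨(v, s), ⟨hv, hs⟩, rfl⟩
  calc (factors u n).ncard ≤ (factors u 2 ×ˢ Set.Iio (Sp σ p)).ncard :=
        (Set.ncard_le_ncard hsub (hfin.image _)).trans (Set.ncard_image_le hfin)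
    _ = (factors u 2).ncard * Sp σ p := by simp [Set.ncard_prod]
    _ ≤ _ := Nat.mul_le_mul_right _ (ncard_factors_le_pow u 2)

end Factors

section Gaps

variable {A : Type*} {σ : A → List A} {u : ℕ → A} {n p d g : ℕ}

theorem IsGap.mono {w : List A} {g' : ℕ} (h : IsGap u w g) (hg : g ≤ g') : IsGap u w g' :=
  fun i => (h i).trans (seg_infix_seg le_rfl (Nat.le_add_right _ _) (by omega))

theorem isGap_gapConst [Finite A] (hgap : ∀ w ∈ factors u 2, ∃ g, IsGap u w g) {w : List A}
    (hw : w ∈ factors u 2) : IsGap u w (gapConst u) := by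
  have hbdd : BddAbove {m | ∃ w ∈ factors u 2, m = minGap u w} := by
    refine ((finite_factors u 2).image (minGap u)).bddAbove.mono ?_
    rintro _ ⟨w, hw, rfl⟩
    exact Set.mem_image_of_mem _ hw
  have hmin : IsGap u w (minGap u w) := Nat.sInf_mem (hgap w hw)
  exact hmin.mono (le_csSup hbdd ⟨w, hw, rfl⟩)

theorem PowerFree.of_isGap {K : ℕ} (hap : AperiodicSeq u)
    (hgap : ∀ d > 0, ∀ w ∈ factors u (d + 1), IsGap u w ((K + 1) * d)) : PowerFree u K := by
  intro x d hd hper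
  refine hap d hd (funext fun t => ?_)
  obtain ⟨y, hxy, hy, hty⟩ :=
    exists_agree_of_seg_infix (hgap d hd (seg u t (t + (d + 1))) ⟨t, rfl⟩ x)
  have hyd : u y = u (y + d) := by
    have := hper (y - x) (by rw [Nat.succ_mul] at hy; omega)
    rwa [Nat.add_right_comm, Nat.add_sub_cancel' hxy] at this
  rw [hty d (Nat.lt_succ_self d), ← hyd]
  exact (hty 0 (Nat.succ_pos d)).symm

variable [Fintype A] [Nonempty A]

theorem isGap_mul_Sp (hσ : ∀ a, σ a ≠ []) (hfix : IsFixedPoint σ u)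
    (hgap : ∀ w ∈ factors u 2, IsGap u w g) (hd : d ≤ Ip σ p) {w : List A}
    (hw : w ∈ factors u (d + 1)) : IsGap u w ((g + 1) * Sp σ p) := fun x => by
  obtain ⟨v, hv, s, -, rfl⟩ :=
    exists_drop_take_eq_of_mem_factors hσ hfix (Nat.succ_le_succ hd) hw
  obtain ⟨m, hm, hxm⟩ := exists_mem_block hσ u p x
  have hS₁ := cutPos_add_le σ u p m 1
  have hSg := cutPos_add_le σ u p (m + 1) g
  have hcut : cutPos σ u p (m + 1) ≤ cutPos σ u p (m + 1 + g) :=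
    monotone_cutPos σ u p (Nat.le_add_right _ _)
  calc ((substPow σ p v).drop s).take (d + 1) <:+: substPow σ p v :=
        (List.take_prefix _ _).isInfix.trans (List.drop_suffix _ _).isInfix
    _ <:+: substPow σ p (seg u (m + 1) (m + 1 + g)) := substPow_infix_substPow (hgap v hv _) p
    _ = seg u (cutPos σ u p (m + 1)) (cutPos σ u p (m + 1 + g)) := substPow_seg hfix p _ _
    _ <:+: seg u x (x + (g + 1) * Sp σ p) :=
        seg_infix_seg hxm.le hcut (by rw [Nat.succ_mul]; omega)

theorem exists_isGap (hprim : IsPrimitiveSubst σ) (hσ : ∀ a, σ a ≠ []) (hfix : IsFixedPoint σ u)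
    (hgrow : ∀ d, ∃ p, d ≤ Ip σ p) {w : List A} (hw : w ∈ factors u n) : ∃ g, IsGap u w g := by
  obtain ⟨i, rfl⟩ := hw
  obtain ⟨k, hk⟩ := hprim
  obtain ⟨p, hp⟩ := hgrow (i + n)
  have hprefix : seg u i (i + n) <:+: substPow σ p [u 0] := by
    have hlen := hp.trans (Ip_le_length_substPow_singleton σ p (u 0))
    rw [← seg_succ, substPow_seg_zero hfix, cutPos, seg_succ]
    exact seg_infix_seg i.zero_le (Nat.le_add_right _ _) hlen
  have hblock (m : ℕ) : seg u i (i + n) <:+: substPow σ (p + k) (seg u m (m + 1)) := by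
    rw [substPow_add, seg_succ]
    exact hprefix.trans
      (substPow_infix_substPow ((List.singleton_infix_iff _ _).mpr (hk (u 0) (u m))) p)
  refine ⟨2 * Sp σ (p + k), fun x => ?_⟩
  obtain ⟨m, hm, hxm⟩ := exists_mem_block hσ u (p + k) x
  have hS₁ := cutPos_add_le σ u (p + k) m 1
  have hS₂ := cutPos_add_le σ u (p + k) (m + 1) 1
  refine (hblock (m + 1)).trans ?_
  rw [substPow_seg hfix]
  exact seg_infix_seg hxm.le (monotone_cutPos σ u (p + k) (Nat.le_add_right _ _)) (by omega)

end Gaps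

section Weights

variable {A : Type*} {σ : A → List A} {lam c : ℝ} {β : A → ℝ}

/-- The length of a word when each letter `a` is given length `β a`; for a right eigenvector `β` of
the incidence matrix, `σ` multiplies this length by the eigenvalue. -/
def wordWeight (β : A → ℝ) (w : List A) : ℝ := (w.map β).sum

theorem wordWeight_singleton (β : A → ℝ) (a : A) : wordWeight β [a] = β a := by
  simp [wordWeight]

theorem wordWeight_cons (β : A → ℝ) (a : A) (w : List A) :
    wordWeight β (a :: w) = β a + wordWeight β w := by
  simp [wordWeight]

theorem wordWeight_append (β : A → ℝ) (v w : List A) :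
    wordWeight β (v ++ w) = wordWeight β v + wordWeight β w := by
  simp [wordWeight]

theorem length_mul_le_wordWeight (hc : ∀ a, c ≤ β a) (w : List A) :
    w.length * c ≤ wordWeight β w := by
  simpa [wordWeight] using (w.map β).card_nsmul_le_sum c (by simpa using fun a _ => hc a)

theorem wordWeight_le_length_mul (hc : ∀ a, β a ≤ c) (w : List A) :
    wordWeight β w ≤ w.length * c := by
  simpa [wordWeight] using (w.map β).sum_le_card_nsmul c (by simpa using fun a _ => hc a)

variable [Fintype A] [DecidableEq A]

theorem wordWeight_eq_sum_count (β : A → ℝ) (w : List A) :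
    wordWeight β w = ∑ a, (w.count a : ℝ) * β a := by
  rw [wordWeight, Finset.sum_list_map_count]
  refine (Finset.sum_subset (Finset.subset_univ _) fun a _ ha => ?_).trans (by simp)
  rw [List.count_eq_zero.mpr (by simpa using ha), zero_nsmul]

theorem wordWeight_substWord (heig : (incMatrixR σ).mulVec β = lam • β) (w : List A) :
    wordWeight β (substWord σ w) = lam * wordWeight β w := by
  induction w with
  | nil => simp [wordWeight, substWord]
  | cons a w ih =>
    have ha : wordWeight β (σ a) = lam * β a := by
      rw [wordWeight_eq_sum_count]; exact congrFun heig a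
    rw [substWord, List.flatMap_cons, wordWeight_append, ha, ← substWord, ih, wordWeight_cons]
    ring

theorem wordWeight_substPow (heig : (incMatrixR σ).mulVec β = lam • β) (p : ℕ) (w : List A) :
    wordWeight β (substPow σ p w) = lam ^ p * wordWeight β w := by
  induction p with
  | zero => simp [substPow]
  | succ p ih => rw [substPow_succ, wordWeight_substWord heig, ih, pow_succ']; ring

theorem nonneg_of_mulVec_eq [Nonempty A] (hβ : ∀ a, 0 < β a)
    (heig : (incMatrixR σ).mulVec β = lam • β) : 0 ≤ lam := by
  obtain ⟨a⟩ := ‹Nonempty A›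
  have h := length_mul_le_wordWeight (fun a => (hβ a).le) (substWord σ [a])
  rw [mul_zero, wordWeight_substWord heig, wordWeight_singleton] at h
  exact nonneg_of_mul_nonneg_left h (hβ a)

theorem ne_nil_of_mulVec_eq (hβ : ∀ a, 0 < β a) (hlam : 0 < lam)
    (heig : (incMatrixR σ).mulVec β = lam • β) (a : A) : σ a ≠ [] := by
  intro hnil
  have h := wordWeight_substWord heig [a]
  rw [wordWeight_singleton, substWord, List.flatMap_singleton, hnil] at h
  exact (mul_pos hlam (hβ a)).ne h

end Weights

section Perron

variable {A : Type*} [Fintype A] [Nonempty A] {σ : A → List A} {lam : ℝ} {β : A → ℝ}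

theorem le_Cst_mul (hβ : ∀ a, 0 < β a) (a b : A) : β a ≤ Cst β * β b := by
  have hinf : 0 < Finset.univ.inf' Finset.univ_nonempty β :=
    (Finset.lt_inf'_iff _).mpr fun a _ => hβ a
  calc β a ≤ Finset.univ.sup' Finset.univ_nonempty β := Finset.le_sup' β (Finset.mem_univ a)
    _ ≤ Cst β * Finset.univ.inf' Finset.univ_nonempty β := (div_le_iff₀ hinf).mp (Nat.le_ceil _)
    _ ≤ Cst β * β b := by gcongr; exact Finset.inf'_le β (Finset.mem_univ b)

theorem one_le_Cst (hβ : ∀ a, 0 < β a) : 1 ≤ Cst β := by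
  obtain ⟨a⟩ := ‹Nonempty A›
  exact_mod_cast (le_mul_iff_one_le_left (hβ a)).mp (le_Cst_mul hβ a a)

theorem le_Kst (u : ℕ → A) (lam : ℝ) (β : A → ℝ) :
    lam * (Cst β : ℝ) ^ 2 * max (2 * ((gapConst u : ℝ) + 1)) ((Fintype.card A : ℝ) ^ 2) ≤
      Kst u lam β :=
  Nat.le_ceil _

theorem Cst_sq_le_Kst (hlam : 1 ≤ lam) (u : ℕ → A) (β : A → ℝ) : Cst β ^ 2 ≤ Kst u lam β := by
  have hmax : (1 : ℝ) ≤ max (2 * ((gapConst u : ℝ) + 1)) ((Fintype.card A : ℝ) ^ 2) :=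
    le_max_of_le_left (by linarith [(gapConst u).cast_nonneg (α := ℝ)])
  have : (Cst β : ℝ) ^ 2 ≤ Kst u lam β := calc
    (Cst β : ℝ) ^ 2 ≤ lam * Cst β ^ 2 := le_mul_of_one_le_left (by positivity) hlam
    _ ≤ lam * Cst β ^ 2 * _ := le_mul_of_one_le_right (by positivity) hmax
    _ ≤ Kst u lam β := le_Kst u lam β
  exact_mod_cast this

variable [DecidableEq A]

theorem Sp_le_Cst_mul_pow (hβ : ∀ a, 0 < β a)
    (heig : (incMatrixR σ).mulVec β = lam • β) (p : ℕ) : (Sp σ p : ℝ) ≤ Cst β * lam ^ p := by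
  have hlam := nonneg_of_mulVec_eq hβ heig
  obtain ⟨b, hb⟩ := Finite.exists_min β
  obtain ⟨a, -, ha⟩ := Finset.exists_mem_eq_sup' Finset.univ_nonempty
    fun a => (substPow σ p [a]).length
  rw [Sp, ha]
  refine le_of_mul_le_mul_right ?_ (hβ b)
  calc ((substPow σ p [a]).length : ℝ) * β b ≤ wordWeight β (substPow σ p [a]) :=
        length_mul_le_wordWeight hb _
    _ = lam ^ p * β a := by rw [wordWeight_substPow heig, wordWeight_singleton]
    _ ≤ lam ^ p * (Cst β * β b) := by gcongr; exact le_Cst_mul hβ a b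
    _ = Cst β * lam ^ p * β b := by ring

theorem pow_le_Cst_mul_Ip (hβ : ∀ a, 0 < β a)
    (heig : (incMatrixR σ).mulVec β = lam • β) (p : ℕ) : lam ^ p ≤ Cst β * Ip σ p := by
  obtain ⟨a, -, ha⟩ := Finset.exists_mem_eq_inf' Finset.univ_nonempty
    fun a => (substPow σ p [a]).length
  rw [Ip, ha]
  refine le_of_mul_le_mul_right ?_ (hβ a)
  calc lam ^ p * β a = wordWeight β (substPow σ p [a]) := by
        rw [wordWeight_substPow heig, wordWeight_singleton]
    _ ≤ (substPow σ p [a]).length * (Cst β * β a) :=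
        wordWeight_le_length_mul (fun b => le_Cst_mul hβ b a) _
    _ = Cst β * (substPow σ p [a]).length * β a := by ring

theorem Ip_le_pow (hβ : ∀ a, 0 < β a) (heig : (incMatrixR σ).mulVec β = lam • β) (p : ℕ) :
    (Ip σ p : ℝ) ≤ lam ^ p := by
  obtain ⟨b, hb⟩ := Finite.exists_min β
  refine le_of_mul_le_mul_right ?_ (hβ b)
  calc (Ip σ p : ℝ) * β b ≤ (substPow σ p [b]).length * β b := by
        have := (hβ b).le
        gcongr; exact Ip_le_length_substPow_singleton σ p b
    _ ≤ wordWeight β (substPow σ p [b]) := length_mul_le_wordWeight hb _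
    _ = lam ^ p * β b := by rw [wordWeight_substPow heig, wordWeight_singleton]

theorem one_lt_of_isPrimitiveSubst (h2 : 2 ≤ Fintype.card A) (hprim : IsPrimitiveSubst σ)
    (hβ : ∀ a, 0 < β a) (heig : (incMatrixR σ).mulVec β = lam • β) : 1 < lam := by
  obtain ⟨k, hk⟩ := hprim
  have hlen (b : A) : 2 ≤ (substPow σ k [b]).length := calc
    2 ≤ (substPow σ k [b]).toFinset.card := by
        rwa [Finset.eq_univ_of_forall fun a => List.mem_toFinset.mpr (hk a b), Finset.card_univ]
    _ ≤ (substPow σ k [b]).length := List.toFinset_card_le _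
  have hIp : (2 : ℝ) ≤ Ip σ k := by exact_mod_cast Finset.le_inf' _ _ fun b _ => hlen b
  by_contra! hlam
  linarith [Ip_le_pow hβ heig k, pow_le_one₀ (nonneg_of_mulVec_eq hβ heig) hlam (n := k)]

theorem exists_le_Ip (hβ : ∀ a, 0 < β a) (hlam : 1 < lam)
    (heig : (incMatrixR σ).mulVec β = lam • β) (d : ℕ) : ∃ p, d ≤ Ip σ p := by
  obtain ⟨p, hp⟩ := pow_unbounded_of_one_lt ((Cst β : ℝ) * d) hlam
  have h := lt_of_mul_lt_mul_left (hp.trans_le (pow_le_Cst_mul_Ip hβ heig p)) (Nat.cast_nonneg _)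
  exact ⟨p, by exact_mod_cast h.le⟩

theorem Sp_le_Cst_sq_mul_Ip (hβ : ∀ a, 0 < β a)
    (heig : (incMatrixR σ).mulVec β = lam • β) (p : ℕ) : Sp σ p ≤ Cst β ^ 2 * Ip σ p := by
  have : (Sp σ p : ℝ) ≤ Cst β ^ 2 * Ip σ p := calc
    (Sp σ p : ℝ) ≤ Cst β * lam ^ p := Sp_le_Cst_mul_pow hβ heig p
    _ ≤ Cst β * (Cst β * Ip σ p) := by gcongr; exact pow_le_Cst_mul_Ip hβ heig p
    _ = Cst β ^ 2 * Ip σ p := by ring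
  exact_mod_cast this

theorem Sp_succ_le (hβ : ∀ a, 0 < β a)
    (heig : (incMatrixR σ).mulVec β = lam • β) (p : ℕ) :
    (Sp σ (p + 1) : ℝ) ≤ lam * Cst β ^ 2 * Ip σ p := by
  have hlam := nonneg_of_mulVec_eq hβ heig
  calc (Sp σ (p + 1) : ℝ) ≤ Cst β * lam ^ (p + 1) := Sp_le_Cst_mul_pow hβ heig _
    _ = Cst β * lam * lam ^ p := by ring
    _ ≤ Cst β * lam * (Cst β * Ip σ p) := by gcongr; exact pow_le_Cst_mul_Ip hβ heig p
    _ = lam * Cst β ^ 2 * Ip σ p := by ring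

theorem exists_le_Ip_and_Sp_le (hβ : ∀ a, 0 < β a) (hlam : 1 < lam)
    (heig : (incMatrixR σ).mulVec β = lam • β) {d : ℕ} (hd : 0 < d) :
    ∃ p, d ≤ Ip σ p ∧ (Sp σ p : ℝ) ≤ lam * Cst β ^ 2 * d := by
  have hex := exists_le_Ip hβ hlam heig d
  have hd' : (1 : ℝ) ≤ d := by exact_mod_cast hd
  have hC : (1 : ℝ) ≤ Cst β := by exact_mod_cast one_le_Cst hβ
  refine ⟨Nat.find hex, Nat.find_spec hex, ?_⟩
  rcases h : Nat.find hex with _ | p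
  · have hS : Sp σ 0 = 1 := by simp [Sp, substPow]
    rw [hS, Nat.cast_one]
    exact one_le_mul_of_one_le_of_one_le
      (one_le_mul_of_one_le_of_one_le hlam.le (one_le_pow₀ hC)) hd'
  · have hlt : Ip σ p < d := not_le.mp (Nat.find_min hex (h ▸ p.lt_succ_self))
    refine (Sp_succ_le hβ heig p).trans ?_
    gcongr

variable {u : ℕ → A}

theorem exists_mul_Sp_le_Kst_mul (hβ : ∀ a, 0 < β a) (hlam : 1 < lam)
    (heig : (incMatrixR σ).mulVec β = lam • β) (u : ℕ → A) {d : ℕ} (hd : 0 < d) :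
    ∃ p, d ≤ Ip σ p ∧ (gapConst u + 1) * Sp σ p ≤ Kst u lam β * d ∧
      Fintype.card A ^ 2 * Sp σ p ≤ Kst u lam β * d := by
  obtain ⟨p, hIp, hSp⟩ := exists_le_Ip_and_Sp_le hβ hlam heig hd
  have hmul {x : ℕ} (hx : (x : ℝ) ≤
      max (2 * ((gapConst u : ℝ) + 1)) ((Fintype.card A : ℝ) ^ 2)) :
      x * Sp σ p ≤ Kst u lam β * d := by
    have : (x * Sp σ p : ℝ) ≤ Kst u lam β * d := calc
      (x * Sp σ p : ℝ) ≤ x * (lam * Cst β ^ 2 * d) := by gcongr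
      _ = lam * Cst β ^ 2 * x * d := by ring
      _ ≤ Kst u lam β * d := by
        gcongr
        refine le_trans ?_ (le_Kst u lam β)
        gcongr
    exact_mod_cast this
  refine ⟨p, hIp, hmul (le_max_of_le_left ?_), hmul (le_max_of_le_right (by push_cast; rfl))⟩
  push_cast
  linarith [(gapConst u).cast_nonneg (α := ℝ)]

theorem powerFree_Kst (hβ : ∀ a, 0 < β a) (hlam : 1 < lam)
    (heig : (incMatrixR σ).mulVec β = lam • β) (hfix : IsFixedPoint σ u) (hap : AperiodicSeq u)
    (hgap : ∀ w ∈ factors u 2, ∃ g, IsGap u w g) : PowerFree u (Kst u lam β) := by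
  refine .of_isGap hap fun d hd w hw => ?_
  obtain ⟨p, hIp, hSp, -⟩ := exists_mul_Sp_le_Kst_mul hβ hlam heig u hd
  exact (isGap_mul_Sp (ne_nil_of_mulVec_eq hβ (by linarith) heig) hfix
    (fun v => isGap_gapConst hgap) hIp hw).mono (hSp.trans (by gcongr; omega))

theorem ncard_factors_le_Kst_mul (hβ : ∀ a, 0 < β a) (hlam : 1 < lam)
    (heig : (incMatrixR σ).mulVec β = lam • β) (hfix : IsFixedPoint σ u) {n : ℕ} (hn : 0 < n) :
    (factors u n).ncard ≤ Kst u lam β * n := by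
  obtain ⟨p, hIp, -, hSp⟩ := exists_mul_Sp_le_Kst_mul hβ hlam heig u hn
  exact (ncard_factors_le_card_sq_mul_Sp (ne_nil_of_mulVec_eq hβ (by linarith) heig) hfix
    (by omega)).trans hSp

end Perron

section TwoScales

variable {A : Type*} {σ : A → List A} {u : ℕ → A}
  {D K N W P L a b e f i j l m n p r x y M n' x' M' : ℕ}

theorem Agree.eq_of_mem_block_one (h : Agree u e f l) (hfix : IsFixedPoint σ u)
    (hij : cutPos σ u (1 + r) e + j = cutPos σ u (1 + r) f + i) (he : cutPos σ u (1 + r) e ≤ i)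
    (hl : i < cutPos σ u (1 + r) (e + l)) (hm : i ∈ block σ u 1 m) (hn : j ∈ block σ u 1 n) :
    u m = u n := by
  simp only [cutPos_add_left hfix 1 r] at hij he hl
  rw [cutPos_add_right σ u r] at hl
  exact (h.image hfix r).eq_of_mem_block hij he hl hm hn

theorem Agree.image_block (h : Agree u e (cutPos σ u p n)
    (substPow σ p (seg u n (n + l))).length) (hfix : IsFixedPoint σ u) (r : ℕ) :
    Agree u (cutPos σ u r e) (cutPos σ u (r + p) n)
      (substPow σ (r + p) (seg u n (n + l))).length := by
  have := h.symm.image hfix r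
  rw [← cutPos_add_right, ← substPow_seg hfix, ← substPow_add, ← cutPos_add_left hfix] at this
  exact this.symm

variable [Fintype A] [Nonempty A]

theorem Agree.next_block (h : Agree u y x ((W + 1) * Sp σ p)) (hfix : IsFixedPoint σ u)
    (hw : Agree u (n + 1) (n' + 1) W) (hx : x ∈ block σ u p n)
    (ha : cutPos σ u p (n + 1) = x + a) :
    Agree u (y + a) (cutPos σ u p (n' + 1))
      (substPow σ p (seg u (n' + 1) (n' + 1 + W))).length := by
  have hblock := cutPos_add_le σ u p n 1
  have hlen := cutPos_add_le σ u p (n + 1) W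
  have himage := hw.image hfix p
  have hx₁ := hx.1
  rw [cutPos_add_right σ u p (n + 1)] at hlen
  rw [← seg_eq_seg_iff_agree.mpr hw]
  refine .trans ?_ himage
  rw [ha]
  exact h.shift a (by rw [Nat.succ_mul]; omega)

theorem cutPos_next_le (hfix : IsFixedPoint σ u) (hx : x ∈ block σ u p n) (r : ℕ) :
    cutPos σ u r (cutPos σ u p (n + 1)) ≤ cutPos σ u r x + Sp σ (r + p) := calc
  _ = cutPos σ u (r + p) (n + 1) := (cutPos_add_left hfix r p _).symm
  _ ≤ cutPos σ u (r + p) n + 1 * Sp σ (r + p) := cutPos_add_le σ u _ n 1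
  _ = cutPos σ u r (cutPos σ u p n) + Sp σ (r + p) := by rw [cutPos_add_left hfix, Nat.one_mul]
  _ ≤ _ := Nat.add_le_add_right (monotone_cutPos σ u r hx.1) _

/-- The two positions carry the same image word and are at most `S_{r+p}` apart, a small fraction
of its length, so if they were distinct this word would be a high power. -/
theorem cutPos_add_eq_of_agree (hfix : IsFixedPoint σ u) (hpow : PowerFree u K)
    (hK : K * Sp σ (r + p) ≤ W * Ip σ (r + p)) (hw : Agree u (n + 1) (n' + 1) W)
    (h : Agree u (cutPos σ u p M) x ((W + 1) * Sp σ p)) (hx : x ∈ block σ u p n)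
    (ha : cutPos σ u p (n + 1) = x + a)
    (h' : Agree u (cutPos σ u (r + p) M) x' ((W + 1) * Sp σ (r + p)))
    (hx' : x' ∈ block σ u (r + p) n') (hb : cutPos σ u (r + p) (n' + 1) = x' + b) :
    cutPos σ u r (cutPos σ u p M + a) = cutPos σ u (r + p) M + b := by
  have hlow : Agree u (cutPos σ u r (cutPos σ u p M + a)) (cutPos σ u (r + p) (n' + 1))
      (substPow σ (r + p) (seg u (n' + 1) (n' + 1 + W))).length :=
    (h.next_block hfix hw hx ha).image_block hfix r
  have hhigh := h'.next_block hfix (fun _ _ => rfl) hx' hb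
  have hlen := hK.trans (mul_Ip_le_length_substPow_seg σ u (r + p) (n' + 1) W)
  have hbSp : b ≤ Sp σ (r + p) := by
    have := cutPos_add_le σ u (r + p) n' 1
    have := hx'.1
    omega
  have haSp : cutPos σ u r (cutPos σ u p M + a) ≤ cutPos σ u (r + p) M + Sp σ (r + p) := by
    have hap : a ≤ (W + 1) * Sp σ p := by
      have := cutPos_add_le σ u p n 1
      have := hx.1
      rw [Nat.succ_mul]
      omega
    have hoff := h.cutPos_add_cutPos hap σ r
    have := cutPos_next_le hfix hx r
    rw [← ha, ← cutPos_add_left hfix r p M] at hoff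
    omega
  have hle : cutPos σ u (r + p) M ≤ cutPos σ u r (cutPos σ u p M + a) := by
    rw [cutPos_add_left hfix]
    exact monotone_cutPos σ u r (Nat.le_add_right _ _)
  exact hpow.eq_of_agree (hlow.trans hhigh.symm) (by omega) (by omega) hlen

/-- Data at scale `p` around two positions `i` and `j` of `u` with the same surroundings: the
`M`-th `p`-cutting point lies shortly before `i`, its translate `x` next to `j` lies in the
`n`-th `p`-block, and the agreement reaches beyond the `W` blocks that follow this one. -/
structure IsAnchor (σ : A → List A) (u : ℕ → A) (W i j p M n x : ℕ) : Prop where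
  translate : cutPos σ u p M + j = x + i
  mem_block : x ∈ block σ u p n
  agree : Agree u (cutPos σ u p M) x ((W + 1) * Sp σ p)
  add_Sp_le : cutPos σ u p M + Sp σ p ≤ i
  lt_add_Ip : i < cutPos σ u p M + W * Ip σ p

theorem IsAnchor.eq_of_agree (hq : IsAnchor σ u W i j (1 + r + p) M' n' x')
    (hp : IsAnchor σ u W i j p M n x) (hfix : IsFixedPoint σ u) (hpow : PowerFree u K)
    (hK : K * Sp σ (1 + r + p) ≤ W * Ip σ (1 + r + p)) (hN : (W + 1) * Sp σ p ≤ N * Ip σ p)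
    (hv : Agree u M M' N) (hw : Agree u (n + 1) (n' + 1) W)
    (hm : i ∈ block σ u 1 m) (hn : j ∈ block σ u 1 l) : u m = u l := by
  obtain ⟨a, ha⟩ := Nat.exists_eq_add_of_le hp.mem_block.2.le
  obtain ⟨b, hb⟩ := Nat.exists_eq_add_of_le hq.mem_block.2.le
  have hpM' : Agree u (cutPos σ u p M') x ((W + 1) * Sp σ p) :=
    ((hv.image hfix p).mono
      (hN.trans (mul_Ip_le_length_substPow_seg σ u p M N))).symm.trans hp.agree
  have hab := cutPos_add_eq_of_agree hfix hpow hK hw hpM' hp.mem_block ha hq.agree hq.mem_block hb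
  have hnext := hpM'.next_block hfix hw hp.mem_block ha
  have hend := hnext.cutPos_add_cutPos le_rfl σ (1 + r)
  rw [← cutPos_add_right, ← cutPos_add_left hfix, ← cutPos_add_left hfix] at hend
  have hIp := le_cutPos_add σ u (1 + r + p) (n' + 1) W
  have hSp := cutPos_add_le σ u (1 + r + p) n' 1
  have hx' := hq.mem_block.1
  obtain ⟨htranslate, -, -, hlow, hhigh⟩ := hq
  refine hnext.eq_of_mem_block_one hfix (r := r) ?_ (by omega) (by omega) hm hn
  rw [← cutPos_add_left hfix]
  omega

theorem exists_isAnchor (hσ : ∀ a, σ a ≠ []) (hD : Sp σ p ≤ D * Ip σ p) (hDW : (D + 1) * D ≤ W)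
    (hDL : (D + 1) * Sp σ p ≤ L) (hWL : (W + 1) * Sp σ p ≤ L) (hi : L ≤ i) (hj : L ≤ j)
    (h : seg u (i - L) (i + L) = seg u (j - L) (j + L)) :
    ∃ M n x, IsAnchor σ u W i j p M n x := by
  obtain ⟨m, hm⟩ := exists_mem_block hσ u p i
  have hDm : D ≤ m := by
    have hm₀ := cutPos_add_le σ u p 0 (m + 1)
    rw [cutPos_zero, Nat.zero_add, Nat.zero_add] at hm₀
    have := Nat.lt_of_mul_lt_mul_right ((hDL.trans hi).trans_lt (hm.2.trans_le hm₀))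
    omega
  obtain ⟨M, rfl⟩ := Nat.exists_eq_add_of_le' hDm
  have hlow : cutPos σ u p M + Sp σ p ≤ i := by
    have := le_cutPos_add σ u p M D
    have := hm.1
    omega
  have hhigh : i < cutPos σ u p M + (D + 1) * Sp σ p :=
    hm.2.trans_le (cutPos_add_le σ u p M (D + 1))
  have hDSp : (D + 1) * Sp σ p ≤ W * Ip σ p := calc
    (D + 1) * Sp σ p ≤ (D + 1) * (D * Ip σ p) := by gcongr
    _ = (D + 1) * D * Ip σ p := by ring
    _ ≤ W * Ip σ p := by gcongr
  obtain ⟨x, hx⟩ : ∃ x, cutPos σ u p M + j = x + i := ⟨cutPos σ u p M + j - i, by omega⟩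
  obtain ⟨n, hn⟩ := exists_mem_block hσ u p x
  exact ⟨M, n, x, hx, hn, agree_of_seg_eq h hi hj (by omega) (by omega) (by omega), hlow,
    hhigh.trans_le (by omega)⟩

theorem eq_of_seg_eq_seg (hσ : ∀ a, σ a ≠ []) (hfix : IsFixedPoint σ u) (hpow : PowerFree u K)
    (hfac : ∀ n > 0, (factors u n).ncard ≤ K * n) (hD : ∀ p, Sp σ p ≤ D * Ip σ p)
    (hKW : K * D ≤ W) (hDW : (D + 1) * D ≤ W) (hWN : (W + 1) * D ≤ N)
    (hP : K * N * (K * W) < P) (hL : N * Sp σ P ≤ L) (hi : L ≤ i) (hj : L ≤ j)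
    (h : seg u (i - L) (i + L) = seg u (j - L) (j + L))
    (hm : i ∈ block σ u 1 m) (hn : j ∈ block σ u 1 n) : u m = u n := by
  have hD₀ : 0 < D := by
    have := hD 0
    have hS : Sp σ 0 = 1 := by simp [Sp, substPow]
    exact Nat.pos_of_ne_zero fun hD₀ => by simp [hS, hD₀] at this
  have hDW' : D + 1 ≤ W := (Nat.le_mul_of_pos_right _ hD₀).trans hDW
  have hWN' : W + 1 ≤ N := (Nat.le_mul_of_pos_right _ hD₀).trans hWN
  have hNL {p : ℕ} (hp : p < P) {k : ℕ} (hk : k ≤ N) : k * Sp σ p ≤ L :=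
    (Nat.mul_le_mul hk (monotone_Sp hσ hp.le)).trans hL
  have hanchor : ∀ p < P, ∃ M n x, IsAnchor σ u W i j p M n x := fun p hp =>
    exists_isAnchor hσ (hD p) hDW (hNL hp (by omega)) (hNL hp hWN') hi hj h
  choose! M n' x hx using hanchor
  have hscale {k l : ℕ} (hkl : k * D ≤ l) (p : ℕ) : k * Sp σ p ≤ l * Ip σ p := calc
    k * Sp σ p ≤ k * (D * Ip σ p) := Nat.mul_le_mul_left k (hD p)
    _ = k * D * Ip σ p := by ring
    _ ≤ l * Ip σ p := Nat.mul_le_mul_right _ hkl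
  have hcard : (factors u N).ncard * (factors u W).ncard < P :=
    (Nat.mul_le_mul (hfac N (by omega)) (hfac W (by omega))).trans_lt hP
  obtain ⟨p, q, hpq, hq, hv, hw⟩ :=
    exists_lt_agree_agree (u := u) M (fun p => n' p + 1) hcard
  obtain ⟨r, rfl⟩ : ∃ r, q = 1 + r + p := ⟨q - p - 1, by omega⟩
  exact (hx _ hq).eq_of_agree (hx p (hpq.trans hq)) hfix hpow (hscale hKW _) (hscale hWN p) hv hw
    hm hn

end TwoScales

section Constants

variable {A : Type*} [Fintype A] [Nonempty A] {lam : ℝ} {β : A → ℝ}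

theorem lt_p0 (hβ : ∀ a, 0 < β a) (u : ℕ → A) (lam : ℝ) :
    Kst u lam β * (Cst β ^ 4 * (Kst u lam β + 1) + 2 * Cst β ^ 2 + 1) *
      (Kst u lam β * (Cst β ^ 2 * (Kst u lam β + 1) + 1)) < p0 u lam β := by
  have hC : Cst β ^ 2 ≤ Cst β ^ 6 := Nat.pow_le_pow_right (one_le_Cst hβ) (by norm_num)
  -- Only the first term of the sum defining `p₀` is needed.
  have hsum {a b : ℕ} (hab : a ≤ b) : a ≤ ∑ n ∈ Finset.Icc a b, n :=
    Finset.single_le_sum (f := fun n => n) (fun _ _ => Nat.zero_le _) (Finset.left_mem_Icc.mpr hab)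
  calc _ = Kst u lam β ^ 2 * (Cst β ^ 4 * (Kst u lam β + 1) + 2 * Cst β ^ 2 + 1) *
        (Cst β ^ 2 * (Kst u lam β + 1) + 1) := by ring
    _ < p0 u lam β := Nat.lt_succ_of_le
        (Nat.mul_le_mul_left _ ((Nat.le_succ _).trans (hsum (by nlinarith))))

end Constants

theorem stmt_9_general {A : Type*} [Fintype A] [DecidableEq A] [Nonempty A] {σ : A → List A}
    {u : ℕ → A} (hfix : IsFixedPoint σ u) (hap : AperiodicSeq u)
    (hgap : ∀ w ∈ factors u 2, ∃ g, IsGap u w g) {lam : ℝ} (hlam : 1 < lam) {β : A → ℝ}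
    (hβ : ∀ a, 0 < β a) (heig : (incMatrixR σ).mulVec β = lam • β) {i j m n : ℕ}
    (hi : L0 σ u lam β ≤ i) (hj : L0 σ u lam β ≤ j)
    (h : seg u (i - L0 σ u lam β) (i + L0 σ u lam β) =
      seg u (j - L0 σ u lam β) (j + L0 σ u lam β))
    (hm : i ∈ block σ u 1 m) (hn : j ∈ block σ u 1 n) : u m = u n := by
  have hCK := Cst_sq_le_Kst hlam.le u β
  refine eq_of_seg_eq_seg (D := Cst β ^ 2) (W := Cst β ^ 2 * (Kst u lam β + 1) + 1)
    (N := Cst β ^ 4 * (Kst u lam β + 1) + 2 * Cst β ^ 2 + 1)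
    (ne_nil_of_mulVec_eq hβ (by linarith) heig) hfix (powerFree_Kst hβ hlam heig hfix hap hgap)
    (fun n hn => ncard_factors_le_Kst_mul hβ hlam heig hfix hn)
    (Sp_le_Cst_sq_mul_Ip hβ heig) ?_ ?_ ?_ (lt_p0 hβ u lam) le_rfl hi hj h hm hn
  · nlinarith
  · nlinarith
  · nlinarith

/-- Lemma 4.2, second part: `σ` has the local unique composition property under the index
`L₀ = (C⁴(K+1)+2C²+1) S_{p₀}`. -/
theorem stmt_9 (A : Type*) [Fintype A] [DecidableEq A] [Nonempty A]
    (h2 : 2 ≤ Fintype.card A)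
    (σ : A → List A) (hσne : ∀ a, σ a ≠ [])
    (hprim : IsPrimitiveSubst σ)
    (u : ℕ → A) (hfix : IsFixedPoint σ u) (hap : AperiodicSeq u)
    (lam : ℝ) (β : A → ℝ) (hβ : ∀ a, 0 < β a)
    (heig : (incMatrixR σ).mulVec β = lam • β) :
    ∀ i j m n : ℕ, L0 σ u lam β ≤ i → L0 σ u lam β ≤ j →
      seg u (i - L0 σ u lam β) (i + L0 σ u lam β) =
        seg u (j - L0 σ u lam β) (j + L0 σ u lam β) →
      (substWord σ (seg u 0 m)).length ≤ i → i < (substWord σ (seg u 0 (m + 1))).length →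
      (substWord σ (seg u 0 n)).length ≤ j → j < (substWord σ (seg u 0 (n + 1))).length →
      u m = u n := by
  intro i j m n hi hj h hm₁ hm₂ hn₁ hn₂
  have hlam := one_lt_of_isPrimitiveSubst h2 hprim hβ heig
  exact stmt_9_general hfix hap
    (fun w hw => exists_isGap hprim hσne hfix (exists_le_Ip hβ hlam heig) hw)
    hlam hβ heig hi hj h ⟨hm₁, hm₂⟩ ⟨hn₁, hn₂⟩
end

section
/- In the directed, finite graph G, the number of edges leaving any given vertex is at most one. -/
open List Filter

/-! If `s'w` and `t'w` are suffixes of `σ(s)` and `σ(t)`, where `s' = xac` and `t' = ybc` with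
`a ≠ b`, then `cw` is the longest common suffix of `σ(s)` and `σ(t)`. As `|c| = L₁` is prescribed,
this determines `w`, and then `s'w` and `t'w` are determined by their lengths. -/

section CommonSuffix

variable {A : Type*} {S T d d' e : List A} {a b a' b' : A}

theorem eq_of_suffix_of_length_eq (hd : d <:+ S) (he : e <:+ S) (hlen : d.length = e.length) :
    d = e :=
  (suffix_of_suffix_length_le hd he hlen.le).eq_of_length hlen

theorem suffix_of_cons_suffix_of_ne (hab : a ≠ b) (haS : a :: d <:+ S) (hbT : b :: d <:+ T)
    (heS : e <:+ S) (heT : e <:+ T) : e <:+ d := by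
  rcases le_or_gt e.length d.length with hle | hlt
  · exact suffix_of_suffix_length_le heS ((suffix_cons a d).trans haS) hle
  · have haT : a :: d <:+ T := (suffix_of_suffix_length_le haS heS hlt).trans heT
    exact absurd (cons.inj (eq_of_suffix_of_length_eq haT hbT rfl)).1 hab

theorem eq_of_cons_suffix_of_ne (hab : a ≠ b) (haS : a :: d <:+ S) (hbT : b :: d <:+ T)
    (hab' : a' ≠ b') (haS' : a' :: d' <:+ S) (hbT' : b' :: d' <:+ T) : d = d' := by
  have hdd' : d <:+ d' := suffix_of_cons_suffix_of_ne hab' haS' hbT'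
    ((suffix_cons a d).trans haS) ((suffix_cons b d).trans hbT)
  have hd'd : d' <:+ d := suffix_of_cons_suffix_of_ne hab haS hbT
    ((suffix_cons a' d').trans haS') ((suffix_cons b' d').trans hbT')
  exact hdd'.eq_of_length_le hd'd.length_le

end CommonSuffix

section Graph

variable {A : Type*} {σ : A → List A} {u : ℕ → A} {N L₁ : ℕ} {p q q' : List A × List A}

theorem memVstar.swap (hq : memVstar u N L₁ q) : memVstar u N L₁ q.swap := by
  obtain ⟨x, y, c, a, b, hab, hx, hy, hc, hq₁, hq₂, hf₁, hf₂⟩ := hq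
  exact ⟨y, x, c, b, a, hab.symm, hy, hx, hc, hq₂, hq₁, hf₂, hf₁⟩

theorem memVstar.length_fst (hq : memVstar u N L₁ q) : q.1.length = N + L₁ + 1 := by
  obtain ⟨x, y, c, a, b, -, hx, -, hc, hq₁, -, -, -⟩ := hq
  simp only [hq₁, length_append, length_cons, hx, hc, Nat.add_assoc]

theorem memVstar.length_snd (hq : memVstar u N L₁ q) : q.2.length = N + L₁ + 1 :=
  hq.swap.length_fst

theorem memVstar.exists_cons_suffix_of_ne (hq : memVstar u N L₁ q) :
    ∃ (a b : A) (c : List A), a ≠ b ∧ c.length = L₁ ∧ a :: c <:+ q.1 ∧ b :: c <:+ q.2 := by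
  obtain ⟨x, y, c, a, b, hab, -, -, hc, hq₁, hq₂, -, -⟩ := hq
  exact ⟨a, b, c, hab, hc, ⟨x, hq₁.symm⟩, ⟨y, hq₂.symm⟩⟩

theorem edgeRep.swap (h : edgeRep σ p q) : edgeRep σ p.swap q.swap := by
  obtain ⟨w, hw, h₁, h₂⟩ := h
  exact ⟨w, hw, h₂, h₁⟩

theorem edgeRep.right_unique (h : edgeRep σ p q) (h' : edgeRep σ p q')
    (hq : memVstar u N L₁ q) (hq' : memVstar u N L₁ q') : q = q' := by
  obtain ⟨w, -, h₁, h₂⟩ := h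
  obtain ⟨w', -, h₁', h₂'⟩ := h'
  obtain ⟨a, b, c, hab, hc, ha, hb⟩ := hq.exists_cons_suffix_of_ne
  obtain ⟨a', b', c', hab', hc', ha', hb'⟩ := hq'.exists_cons_suffix_of_ne
  have hcw : c ++ w = c' ++ w' := eq_of_cons_suffix_of_ne
    hab ((suffix_append_self_iff.2 ha).trans h₁) ((suffix_append_self_iff.2 hb).trans h₂)
    hab' ((suffix_append_self_iff.2 ha').trans h₁') ((suffix_append_self_iff.2 hb').trans h₂')
  obtain ⟨-, rfl⟩ : c = c' ∧ w = w' := append_inj hcw (hc.trans hc'.symm)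
  have hfst : q.1 ++ w = q'.1 ++ w := eq_of_suffix_of_length_eq h₁ h₁' <| by
    simp only [length_append, hq.length_fst, hq'.length_fst]
  have hsnd : q.2 ++ w = q'.2 ++ w := eq_of_suffix_of_length_eq h₂ h₂' <| by
    simp only [length_append, hq.length_snd, hq'.length_snd]
  exact Prod.ext (append_cancel_right hfst) (append_cancel_right hsnd)

theorem graphEdge.edgeRep_or_edgeRep_swap (h : graphEdge σ p q) :
    edgeRep σ p q ∨ edgeRep σ p q.swap := by
  rcases h with h | h | h | h
  exacts [.inl h, .inr h, .inr h.swap, .inl h.swap]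

theorem stmt_15_general (hq : memVstar u N L₁ q) (hq' : memVstar u N L₁ q')
    (h : graphEdge σ p q) (h' : graphEdge σ p q') : q = q' ∨ q = q'.swap := by
  rcases h.edgeRep_or_edgeRep_swap with h | h <;> rcases h'.edgeRep_or_edgeRep_swap with h' | h'
  · exact .inl (h.right_unique h' hq hq')
  · exact .inr (h.right_unique h' hq hq'.swap)
  · exact .inr (Prod.swap_eq_iff_eq_swap.1 (h.right_unique h' hq.swap hq'))
  · exact .inl (Prod.swap_injective (h.right_unique h' hq.swap hq'.swap))

end Graph

/-- Remark 4.6: in the directed finite graph `G`, the number of edges leaving any given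
vertex is at most one (two edges leaving the same vertex end at the same vertex, i.e. at
equal unordered pairs). -/
theorem stmt_15 (A : Type*) [Fintype A] [DecidableEq A] [Nonempty A]
    (h2 : 2 ≤ Fintype.card A)
    (σ : A → List A) (hσne : ∀ a, σ a ≠ [])
    (hprim : IsPrimitiveSubst σ)
    (u : ℕ → A) (hfix : IsFixedPoint σ u) (hap : AperiodicSeq u)
    (lam : ℝ) (β : A → ℝ) (hβ : ∀ a, 0 < β a)
    (heig : (incMatrixR σ).mulVec β = lam • β)
    (ρ : ℝ) (hρ1 : 1 < ρ) (hρlam : ρ < lam)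
    (L₁ : ℕ)
    (hL₁ : ∀ L : ℕ, L₁ ≤ L → ∀ i : ℕ,
      ρ * (L : ℝ) ≤ ((substWord σ (seg u i (i + L))).length : ℝ))
    (L₀ : ℕ)
    (hL₀rec : ∀ i j : ℕ, L₀ ≤ i → L₀ ≤ j →
      seg u (i - L₀) (i + L₀) = seg u (j - L₀) (j + L₀) →
      i ∈ cutPoints σ u 1 → j ∈ cutPoints σ u 1)
    (hL₀comp : ∀ i j m n : ℕ, L₀ ≤ i → L₀ ≤ j →
      seg u (i - L₀) (i + L₀) = seg u (j - L₀) (j + L₀) →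
      (substWord σ (seg u 0 m)).length ≤ i → i < (substWord σ (seg u 0 (m + 1))).length →
      (substWord σ (seg u 0 n)).length ≤ j → j < (substWord σ (seg u 0 (n + 1))).length →
      u m = u n)
    (N : ℕ)
    (hN : max ((Sp σ 1 : ℝ) * ((L₁ : ℝ) + 1) - 1)
        ((1 + (L₀ : ℝ) * ((Ip σ 1 : ℝ)⁻¹ + 1)) / (ρ - 1)) < (N : ℝ)) :
    ∀ p q q' : List A × List A,
      memVstar u N L₁ p → memVstar u N L₁ q → memVstar u N L₁ q' →
      graphEdge σ p q → graphEdge σ p q' → q = q' ∨ q = q'.swap :=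
  fun _ _ _ _ hq hq' h h' => stmt_15_general hq hq' h h'
end
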